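/- Fix a special vertex V_0 of 𝔸 and let δ' = (V_0 ⊆ E_0' ⊇ V_1' ⊆ ⋯ ⊇ V_{r+1}') and δ'' = (V_0 ⊆ E_0'' ⊇ V_1'' ⊆ ⋯ ⊇ V_{r+1}'') be one-skeleton galleries with the same source V_0 such that, for every i, E_i' and E_i'' have the same type and V_i' and V_i'' have the same type. If both δ' and δ'' are minimal relative to the dominant Weyl chamber C⁺ (i.e. E_i' ⊆ V_i' + C⁺ and E_i'' ⊆ V_i'' + C⁺ for all i), then δ' = δ''. (This is the uniqueness assertion in the paper's Proposition on minimal one-skeleton galleries: there is at most one gallery of a given type, with given source, that is contained in the dominant Weyl chamber together with its chain of dominant sectors.) -/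

import Mathlib

/-!
The affine Weyl group is generated by the reflections in a locally finite arrangement of walls, and
a closed chamber is a strict fundamental domain for it: an element taking a point `x` of a closed
chamber to a point of the same chamber fixes `x`. This follows from the exchange condition for words
in the reflections in the walls of the chamber.

Two points not strictly separated by any wall lie in a common closed chamber, so no two distinct
points of a face are conjugate. Likewise, if `g` fixes `v` and takes `v + u` to `v + w` with `u` and
`w` dominant, then `u = w`, because `v + t u` and `v + t w` are unseparated for small `t > 0`. Thus
an edge through `v` inside `v + C⁺` is determined by its type, and so is a vertex of a given edge;
induction along the gallery concludes.
-/


open Pointwise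

variable {A : Type*} [NormedAddCommGroup A] [NormedSpace ℝ A]

/-- The three possible half-space choices `H_{β,n}`, `H⁺_{β,n}`, `H⁻_{β,n}`
attached to an affine root `(β, n)`. -/
def halfChoice (β : A →ₗ[ℝ] ℝ) (m : ℤ) (c : Fin 3) : Set A :=
  if c = 0 then {x | β x + (m : ℝ) = 0}
  else if c = 1 then {x | 0 ≤ β x + (m : ℝ)}
  else {x | β x + (m : ℝ) ≤ 0}

/-- A face of the apartment: a nonempty intersection, over all pairs `(β, n) ∈ Φ⁺ × ℤ`, of a
choice of the wall `H_{β,n}` or one of the two closed half-spaces it bounds. -/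
def IsFace (pos : Finset (A →ₗ[ℝ] ℝ)) (F : Set A) : Prop :=
  F.Nonempty ∧ ∃ σ : (A →ₗ[ℝ] ℝ) → ℤ → Fin 3,
    F = ⋂ β ∈ (pos : Set (A →ₗ[ℝ] ℝ)), ⋂ m : ℤ, halfChoice β m (σ β m)

/-- The dimension of a face: the dimension of its affine span. -/
noncomputable def faceDim (F : Set A) : ℕ := Module.finrank ℝ (affineSpan ℝ F).direction

/-- A vertex: a face of dimension zero. -/
def IsVertexFace (pos : Finset (A →ₗ[ℝ] ℝ)) (F : Set A) : Prop :=
  IsFace pos F ∧ faceDim F = 0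

/-- An edge: a face of dimension one. -/
def IsEdgeFace (pos : Finset (A →ₗ[ℝ] ℝ)) (F : Set A) : Prop :=
  IsFace pos F ∧ faceDim F = 1

/-- A point `x` is special if `α(x) ∈ ℤ` for all roots `α ∈ Φ`. -/
def IsSpecialPt (Φ : Finset (A →ₗ[ℝ] ℝ)) (x : A) : Prop :=
  ∀ α ∈ Φ, ∃ m : ℤ, α x = (m : ℝ)

/-- The affine Weyl group: the group of affine transformations of the apartment generated by
the affine reflections `s_{α,n} : x ↦ x − (α(x)+n)·α∨`. -/
def affWeyl (Φ : Finset (A →ₗ[ℝ] ℝ)) (cor : (A →ₗ[ℝ] ℝ) → A) : Subgroup (A ≃ᵃ[ℝ] A) :=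
  Subgroup.closure {g | ∃ α ∈ Φ, ∃ m : ℤ, ∀ x, g x = x - (α x + (m : ℝ)) • cor α}

/-- Two faces have the same type if they lie in the same orbit of the affine Weyl group. -/
def SameType (Φ : Finset (A →ₗ[ℝ] ℝ)) (cor : (A →ₗ[ℝ] ℝ) → A) (F F' : Set A) : Prop :=
  ∃ g ∈ affWeyl Φ cor, g '' F = F'

/-- The union of the walls through the origin. -/
def wallsSet (Φ : Finset (A →ₗ[ℝ] ℝ)) : Set A :=
  ⋃ α ∈ (Φ : Set (A →ₗ[ℝ] ℝ)), {x | α x = 0}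

/-- A closed Weyl chamber: the closure of a connected component of the complement of the
union of the walls through the origin. -/
def IsWeylChamber (Φ : Finset (A →ₗ[ℝ] ℝ)) (C : Set A) : Prop :=
  ∃ x ∈ (wallsSet Φ)ᶜ, C = closure (connectedComponentIn (wallsSet Φ)ᶜ x)

/-- The stabilizer in the affine Weyl group of a face `F`. -/
def faceStab (Φ : Finset (A →ₗ[ℝ] ℝ)) (cor : (A →ₗ[ℝ] ℝ) → A) (F : Set A) :
    Subgroup (A ≃ᵃ[ℝ] A) where
  carrier := {g | g ∈ affWeyl Φ cor ∧ g '' F = F}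
  one_mem' := ⟨Subgroup.one_mem _, by simp⟩
  mul_mem' := by
    rintro a b ⟨ha, ha'⟩ ⟨hb, hb'⟩
    refine ⟨mul_mem ha hb, ?_⟩
    have h : ⇑(a * b) = ⇑a ∘ ⇑b := rfl
    rw [h, Set.image_comp, hb', ha']
  inv_mem' := by
    rintro a ⟨ha, ha'⟩
    refine ⟨inv_mem ha, ?_⟩
    have h1 : ⇑(a⁻¹) '' (⇑a '' F) = ⇑(a⁻¹) '' F := by rw [ha']
    rw [← Set.image_comp,
      show ⇑(a⁻¹) ∘ ⇑a = id from funext fun x => by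
        simp [AffineEquiv.inv_def],
      Set.image_id] at h1
    exact h1.symm

/-- A one-skeleton gallery `(V_0 ⊆ E_0 ⊇ V_1 ⊆ ⋯ ⊇ V_r ⊆ E_r ⊇ V_{r+1})` in the apartment:
the `V_i` are vertices, `V_0` and `V_{r+1}` are special, and the `E_i` are edges. -/
structure OneSkelGallery (A : Type*) [NormedAddCommGroup A] [NormedSpace ℝ A]
    (Φ pos : Finset (A →ₗ[ℝ] ℝ)) (r : ℕ) where
  V : Fin (r + 2) → Set A
  E : Fin (r + 1) → Set A
  vertex_V : ∀ i, IsVertexFace pos (V i)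
  edge_E : ∀ i, IsEdgeFace pos (E i)
  special_source : ∀ x ∈ V 0, IsSpecialPt Φ x
  special_target : ∀ x ∈ V (Fin.last (r + 1)), IsSpecialPt Φ x
  subset_left : ∀ i : Fin (r + 1), V i.castSucc ⊆ E i
  subset_right : ∀ i : Fin (r + 1), V i.succ ⊆ E i

/-- The dominant Weyl chamber `C⁺ = {x | α(x) ≥ 0 for all α ∈ Φ⁺}`. -/
def domChamber (pos : Finset (A →ₗ[ℝ] ℝ)) : Set A :=
  {x | ∀ α ∈ pos, 0 ≤ α x}

section ExtremePoint

variable {E : Type*} [AddCommGroup E] [Module ℝ E] [TopologicalSpace E] [IsTopologicalAddGroup E]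
  [ContinuousSMul ℝ E] [LocallyConvexSpace ℝ E] [T2Space E]

theorem exists_neg_eq_of_mem_openSegment (ℓ : E →ₗ[ℝ] ℝ) {M : Set E}
    (hfin : {f ∈ M | ℓ f < 0}.Finite) (hne : {f ∈ M | ℓ f < 0}.Nonempty) :
    ∃ e ∈ M, ℓ e < 0 ∧ ∀ b ∈ M, ∀ c ∈ M, e ∈ openSegment ℝ b c → b = e := by
  obtain ⟨f₀, ⟨hf₀M, hf₀⟩, hf₀min⟩ := Set.exists_min_image _ ℓ hfin hne
  have hmin : ∀ b ∈ M, ℓ f₀ ≤ ℓ b := fun b hb =>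
    (lt_or_ge (ℓ b) 0).elim (fun h => hf₀min b ⟨hb, h⟩) hf₀.le.trans
  set T := {f ∈ M | ℓ f = ℓ f₀}
  have hT : T.Finite := hfin.subset fun f hf => ⟨hf.1, hf.2.trans_lt hf₀⟩
  obtain ⟨e, he⟩ := (hT.isCompact_convexHull ℝ).extremePoints_nonempty
    (Set.Nonempty.convexHull (s := T) ⟨f₀, hf₀M, rfl⟩)
  obtain ⟨heM, heℓ⟩ : e ∈ T := extremePoints_convexHull_subset he
  refine ⟨e, heM, heℓ.trans_lt hf₀, fun b hb c hc hbc => ?_⟩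
  obtain ⟨s, t, hs, ht, hst, hsum⟩ := id hbc
  have hℓ : s * (ℓ b - ℓ f₀) + t * (ℓ c - ℓ f₀) = 0 := by
    rw [← hsum, map_add, map_smul, map_smul, smul_eq_mul, smul_eq_mul] at heℓ
    linear_combination heℓ - ℓ f₀ * hst
  have hb0 := mul_nonneg hs.le (sub_nonneg.2 (hmin b hb))
  have hc0 := mul_nonneg ht.le (sub_nonneg.2 (hmin c hc))
  have hbT : b ∈ T := ⟨hb, by
    linarith [(mul_eq_zero.1 (by linarith : s * (ℓ b - ℓ f₀) = 0)).resolve_left hs.ne']⟩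
  have hcT : c ∈ T := ⟨hc, by
    linarith [(mul_eq_zero.1 (by linarith : t * (ℓ c - ℓ f₀) = 0)).resolve_left ht.ne']⟩
  exact he.2 (subset_convexHull ℝ T hbT) (subset_convexHull ℝ T hcT) hbc

end ExtremePoint

/-- A locally finite arrangement of mirrors in a `G`-set `X`. The mirror `i` is the zero locus of
the function `root i`, and `refl i` is the reflection in it. Instead of a linear structure on `X`,
the fields record that a reflection changes a root by a multiple of its own, permutes the roots and
conjugates the reflections accordingly. Each mirror is indexed at least twice, by `root i` and by
its negative. -/
structure ReflectionArrangement (ι G X : Type*) [Group G] [MulAction G X] where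
  root : ι → X → ℝ
  refl : ι → G
  refl_mul_self (i : ι) : refl i * refl i = 1
  refl_smul_of_root_eq_zero (i : ι) (x : X) : root i x = 0 → refl i • x = x
  root_refl_smul_self (i : ι) (x : X) : root i (refl i • x) = -root i x
  exists_root_refl_smul (i j : ι) : ∃ c : ℝ, ∀ x, root j (refl i • x) = root j x - c * root i x
  exists_conj (i j : ι) :
    ∃ k, (∀ x, root k (refl i • x) = root j x) ∧ refl k = refl i * refl j * (refl i)⁻¹
  refl_eq_of_proportional (i j : ι) (c : ℝ) : root j = c • root i → refl j = refl i
  finite_separating (x y : X) : {i | root i x * root i y < 0}.Finite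

namespace ReflectionArrangement

variable {ι G X : Type*} [Group G] [MulAction G X] (S : ReflectionArrangement ι G X)

/-- The reflection group of the arrangement. -/
def group : Subgroup G := Subgroup.closure (Set.range S.refl)

/-- The mirror of the reflection `t` strictly separates `x` from `y`. -/
def Separates (t : G) (x y : X) : Prop := ∃ i, S.refl i = t ∧ S.root i x * S.root i y < 0

/-- A regular point is one that lies on no mirror. -/
def IsRegular (p : X) : Prop := ∀ i, S.root i p ≠ 0

/-- The closed chamber whose interior contains the point `p`, assumed regular. -/
def closedChamber (p : X) : Set X := {x | ∀ i, 0 < S.root i p → 0 ≤ S.root i x}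

/-- The simple reflections of the chamber of `p`, that is, the reflections in its walls, encoded
as those `t` for which no mirror but that of `t` separates `p` from `t • p`. -/
def simpleReflections (p : X) : Set G :=
  {t | t ∈ Set.range S.refl ∧ ∀ u, S.Separates u p (t • p) → u = t}

variable {S}

theorem refl_inv (i : ι) : (S.refl i)⁻¹ = S.refl i :=
  inv_eq_of_mul_eq_one_left (S.refl_mul_self i)

theorem refl_smul_refl_smul (i : ι) (x : X) : S.refl i • S.refl i • x = x := by
  rw [smul_smul, S.refl_mul_self, one_smul]

theorem refl_mem_group (i : ι) : S.refl i ∈ S.group :=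
  Subgroup.subset_closure (Set.mem_range_self i)

variable (S) in
theorem exists_root_eq_neg (i : ι) :
    ∃ k, (∀ x, S.root k x = -S.root i x) ∧ S.refl k = S.refl i := by
  obtain ⟨k, hk, hkr⟩ := S.exists_conj i i
  refine ⟨k, fun x => ?_, by rw [hkr, mul_inv_cancel_right]⟩
  rw [← S.root_refl_smul_self, ← hk, refl_smul_refl_smul]

theorem exists_root_smul {g : G} (hg : g ∈ S.group) :
    ∀ j, ∃ k, (∀ x, S.root k (g • x) = S.root j x) ∧ S.refl k = g * S.refl j * g⁻¹ := by
  induction hg using Subgroup.closure_induction'' with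
  | one => exact fun j => ⟨j, by simp⟩
  | mem _ ht =>
    obtain ⟨i, rfl⟩ := ht
    exact S.exists_conj i
  | inv_mem _ ht =>
    obtain ⟨i, rfl⟩ := ht
    rw [refl_inv]
    exact S.exists_conj i
  | mul g h _ _ ihg ihh =>
    intro j
    obtain ⟨k, hk, hkr⟩ := ihh j
    obtain ⟨l, hl, hlr⟩ := ihg k
    exact ⟨l, fun x => by rw [mul_smul, hl, hk], by rw [hlr, hkr]; group⟩

theorem IsRegular.smul {p : X} (hp : S.IsRegular p) {g : G} (hg : g ∈ S.group) :
    S.IsRegular (g • p) := by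
  intro j
  obtain ⟨k, hk, -⟩ := exists_root_smul (inv_mem hg) j
  rw [← hk, inv_smul_smul]
  exact hp k

namespace Separates

variable {t : G} {x y z : X}

theorem smul (h : S.Separates t x y) {g : G} (hg : g ∈ S.group) :
    S.Separates (g * t * g⁻¹) (g • x) (g • y) := by
  obtain ⟨j, rfl, hj⟩ := h
  obtain ⟨k, hk, hkr⟩ := exists_root_smul hg j
  exact ⟨k, hkr, by rwa [hk, hk]⟩

theorem exists_pos_neg (h : S.Separates t x y) :
    ∃ i, S.refl i = t ∧ 0 < S.root i x ∧ S.root i y < 0 := by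
  obtain ⟨i, rfl, hi⟩ := h
  rcases mul_neg_iff.1 hi with h | h
  · exact ⟨i, rfl, h⟩
  · obtain ⟨k, hk, hkr⟩ := S.exists_root_eq_neg i
    exact ⟨k, hkr, by rw [hk, hk]; constructor <;> linarith⟩

theorem symm (h : S.Separates t x y) : S.Separates t y x :=
  let ⟨i, hi, hxy⟩ := h
  ⟨i, hi, mul_comm (S.root i x) _ ▸ hxy⟩

theorem left_or_right (h : S.Separates t x z) (hy : S.IsRegular y) :
    S.Separates t x y ∨ S.Separates t y z := by
  obtain ⟨i, rfl, hx, hz⟩ := h.exists_pos_neg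
  rcases lt_or_gt_of_ne (hy i) with h | h
  · exact .inl ⟨i, rfl, mul_neg_of_pos_of_neg hx h⟩
  · exact .inr ⟨i, rfl, mul_neg_of_pos_of_neg h hz⟩

end Separates

/-- Roots with the same reflection are proportional, so the choice of `i` in `Separates` is
immaterial. -/
theorem separates_refl_iff {i : ι} {x y : X} :
    S.Separates (S.refl i) x y ↔ S.root i x * S.root i y < 0 := by
  refine ⟨?_, fun h => ⟨i, rfl, h⟩⟩
  rintro ⟨j, hji, hj⟩
  obtain ⟨c, hc⟩ := S.exists_root_refl_smul i j
  have hroot (x : X) : S.root j x = c / 2 * S.root i x := by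
    have := S.root_refl_smul_self j x
    rw [hji, hc] at this
    linarith
  rw [hroot, hroot] at hj
  nlinarith [sq_nonneg (c / 2)]

theorem not_separates_refl_smul {i : ι} {x y : X} (h : S.Separates (S.refl i) x y) :
    ¬ S.Separates (S.refl i) (S.refl i • x) y := by
  intro h'
  have h₁ := separates_refl_iff.1 h
  have h₂ := separates_refl_iff.1 h'
  rw [S.root_refl_smul_self] at h₂
  linarith

theorem separates_refl_smul_self {p : X} (hp : S.IsRegular p) (i : ι) :
    S.Separates (S.refl i) p (S.refl i • p) :=
  ⟨i, rfl, by rw [S.root_refl_smul_self]; linarith [mul_self_pos.2 (hp i)]⟩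

variable (S) in
theorem finite_setOf_separates (x y : X) :
    {t | S.Separates t x y}.Finite :=
  ((S.finite_separating x y).image S.refl).subset fun _ ⟨i, hi, h⟩ => ⟨i, h, hi⟩

/-- If the reflection in `α` makes the positive root `β` negative, `β - c α = -γ`, then `γ` is
positive and `c α = β + γ`. -/
theorem exists_inv_smul_root_mem_openSegment {p : X} {i j : ι} (hi : 0 < S.root i p)
    (hj : 0 < S.root j p) (hij : S.root j (S.refl i • p) < 0) :
    ∃ k, 0 < S.root k p ∧ (S.root i p)⁻¹ • S.root i ∈
      openSegment ℝ ((S.root j p)⁻¹ • S.root j) ((S.root k p)⁻¹ • S.root k) := by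
  obtain ⟨c, hc⟩ := S.exists_root_refl_smul i j
  obtain ⟨l, hl, -⟩ := S.exists_conj i j
  obtain ⟨k, hk, -⟩ := S.exists_root_eq_neg l
  have hroot (x : X) : S.root k x = c * S.root i x - S.root j x := by
    have h := hl (S.refl i • x)
    rw [refl_smul_refl_smul, hc] at h
    linarith [hk x]
  have hkp : 0 < S.root k p := by linarith [hroot p, hc p]
  have hcp : 0 < c * S.root i p := by linarith [hroot p]
  refine ⟨k, hkp, S.root j p / (c * S.root i p), S.root k p / (c * S.root i p),
    div_pos hj hcp, div_pos hkp hcp, ?_, ?_⟩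
  · rw [← add_div, hroot p, add_sub_cancel, div_self hcp.ne']
  · have hc0 : c ≠ 0 := left_ne_zero_of_mul hcp.ne'
    ext x
    simp only [Pi.add_apply, Pi.smul_apply, smul_eq_mul]
    field_simp
    rw [hroot x]
    ring

/-- Among the positive roots normalized to take the value `1` at `p`, an extreme point of the face
where the value at `q` is minimal defines a wall of the chamber of `p`. -/
theorem exists_simple_separates {p q : X} {u : G} (h : S.Separates u p q) :
    ∃ t ∈ S.simpleReflections p, S.Separates t p q := by
  obtain ⟨i₀, -, hi₀p, hi₀q⟩ := h.exists_pos_neg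
  set N : ι → X → ℝ := fun i => (S.root i p)⁻¹ • S.root i
  set M : Set (X → ℝ) := N '' {i | 0 < S.root i p}
  have hNq {i : ι} (hi : 0 < S.root i p) : N i q < 0 ↔ S.root i q < 0 := by
    simp [N, mul_neg_iff, hi, hi.not_gt]
  have hfin : {f ∈ M | LinearMap.proj (R := ℝ) q f < 0}.Finite := by
    refine ((S.finite_separating p q).image N).subset ?_
    rintro _ ⟨⟨i, hi, rfl⟩, hiq⟩
    exact ⟨i, mul_neg_of_pos_of_neg hi ((hNq hi).1 hiq), rfl⟩
  obtain ⟨_, ⟨i, hi, rfl⟩, hiq, hext⟩ := exists_neg_eq_of_mem_openSegment _ hfin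
    ⟨N i₀, ⟨i₀, hi₀p, rfl⟩, (hNq hi₀p).2 hi₀q⟩
  refine ⟨S.refl i, ⟨⟨i, rfl⟩, fun v hv => ?_⟩, i, rfl,
    mul_neg_of_pos_of_neg hi ((hNq hi).1 hiq)⟩
  obtain ⟨j, rfl, hj, hij⟩ := hv.exists_pos_neg
  obtain ⟨k, hk, hseg⟩ := exists_inv_smul_root_mem_openSegment hi hj hij
  have hN : N j = N i := hext _ ⟨j, hj, rfl⟩ _ ⟨k, hk, rfl⟩ hseg
  refine S.refl_eq_of_proportional i j (S.root j p * (S.root i p)⁻¹) ?_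
  rw [mul_smul, show (S.root i p)⁻¹ • S.root i = (S.root j p)⁻¹ • S.root j from hN.symm,
    smul_inv_smul₀ hj.ne']

theorem smul_mem_closedChamber {p x : X} (hx : x ∈ S.closedChamber p) {g : G} (hg : g ∈ S.group) :
    g • x ∈ S.closedChamber (g • p) := by
  intro i hi
  obtain ⟨k, hk, -⟩ := exists_root_smul (inv_mem hg) i
  have h (y : X) : S.root i (g • y) = S.root k y := by rw [← hk, inv_smul_smul]
  rw [h] at hi ⊢
  exact hx k hi

theorem exists_list_prod_eq_of_mem_closure_simpleReflections {p : X} {w : G}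
    (hw : w ∈ Subgroup.closure (S.simpleReflections p)) :
    ∃ l : List G, (∀ a ∈ l, a ∈ S.simpleReflections p) ∧ l.prod = w := by
  have hinv : (S.simpleReflections p)⁻¹ ⊆ S.simpleReflections p := by
    intro t ht
    obtain ⟨i, hi⟩ := ht.1
    rwa [← inv_inv t, ← hi, refl_inv, hi]
  rw [← Subgroup.mem_toSubmonoid, Subgroup.closure_toSubmonoid,
    Set.union_eq_self_of_subset_right hinv] at hw
  exact Submonoid.exists_list_of_mem_closure hw

section RegularPoint

variable {p : X} (hp : S.IsRegular p)
include hp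

theorem exists_mem_closure_simpleReflections_not_separates (q : X) :
    ∃ w ∈ Subgroup.closure (S.simpleReflections p), ∀ u, ¬ S.Separates u p (w • q) := by
  induction hn : {u | S.Separates u p q}.ncard using Nat.strong_induction_on generalizing q with
  | _ n ih =>
  subst hn
  by_cases hq : ∀ u, ¬ S.Separates u p q
  · exact ⟨1, one_mem _, by simpa using hq⟩
  push Not at hq
  obtain ⟨u, hu⟩ := hq
  obtain ⟨_, ⟨⟨i, rfl⟩, hsimple⟩, hi⟩ := exists_simple_separates hu
  have hsub : {u | S.Separates u (S.refl i • p) q} ⊂ {u | S.Separates u p q} := by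
    refine Set.ssubset_iff_of_subset (fun v hv => ?_) |>.2
      ⟨_, hi, not_separates_refl_smul hi⟩
    refine (hv.left_or_right hp).resolve_left fun hv' => ?_
    have hvi : v = S.refl i := hsimple v hv'.symm
    exact not_separates_refl_smul hi (hvi ▸ hv)
  have hlt : {u | S.Separates u p (S.refl i • q)}.ncard < {u | S.Separates u p q}.ncard := by
    refine lt_of_le_of_lt ?_ (Set.ncard_lt_ncard hsub (S.finite_setOf_separates p q))
    refine Set.ncard_le_ncard_of_injOn (MulAut.conj (S.refl i)) (fun v hv => ?_)
      (MulAut.conj (S.refl i)).injective.injOn (S.finite_setOf_separates _ _)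
    have := Separates.smul hv (refl_mem_group i)
    rwa [refl_smul_refl_smul] at this
  obtain ⟨w, hw, hwq⟩ := ih _ hlt _ rfl
  exact ⟨w * S.refl i, mul_mem hw (Subgroup.subset_closure ⟨⟨i, rfl⟩, hsimple⟩), by
    simpa only [mul_smul] using hwq⟩

theorem exchange {l : List G} (hl : ∀ a ∈ l, a ∈ S.simpleReflections p) {t : G}
    (ht : S.Separates t p (l.prod • p)) :
    ∃ l' : List G, (∀ a ∈ l', a ∈ S.simpleReflections p) ∧ l'.length < l.length ∧
      t * l.prod = l'.prod := by
  induction l generalizing t with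
  | nil =>
    obtain ⟨i, -, hpos, hneg⟩ := ht.exists_pos_neg
    rw [List.prod_nil, one_smul] at hneg
    exact absurd hneg hpos.not_gt
  | cons a l ih =>
    obtain ⟨ha, hl_tail⟩ := List.forall_mem_cons.1 hl
    obtain ⟨⟨i, rfl⟩, hsimple⟩ := id ha
    rw [List.prod_cons, mul_smul] at ht
    rcases ht.left_or_right (hp.smul (refl_mem_group i)) with h | h
    · refine ⟨l, hl_tail, by simp, ?_⟩
      rw [hsimple t h, List.prod_cons, ← mul_assoc, S.refl_mul_self, one_mul]
    · have h' := h.smul (refl_mem_group i)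
      rw [refl_smul_refl_smul, refl_smul_refl_smul] at h'
      obtain ⟨l', hl', hlen, hprod⟩ := ih hl_tail h'
      refine ⟨S.refl i :: l', List.forall_mem_cons.2 ⟨ha, hl'⟩, by simpa using hlen, ?_⟩
      rw [List.prod_cons, List.prod_cons, ← hprod]
      simp only [← mul_assoc, S.refl_mul_self, one_mul, refl_inv]

theorem closure_simpleReflections : Subgroup.closure (S.simpleReflections p) = S.group := by
  have hle : Subgroup.closure (S.simpleReflections p) ≤ S.group :=
    Subgroup.closure_mono fun t ht => ht.1
  refine le_antisymm hle ((Subgroup.closure_le _).2 ?_)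
  rintro _ ⟨i, rfl⟩
  obtain ⟨w, hw, hsep⟩ := exists_mem_closure_simpleReflections_not_separates hp (S.refl i • p)
  have hi : S.Separates (S.refl i) p (w⁻¹ • p) := by
    refine ((separates_refl_smul_self hp i).left_or_right
      (hp.smul (inv_mem (hle hw)))).resolve_right fun h => ?_
    have h' := h.smul (hle hw)
    rw [smul_inv_smul] at h'
    exact hsep _ h'
  obtain ⟨l, hl, hlw⟩ := exists_list_prod_eq_of_mem_closure_simpleReflections (inv_mem hw)
  obtain ⟨l', hl', -, hprod⟩ := exchange hp hl (hlw ▸ hi)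
  rw [SetLike.mem_coe, ← mul_inv_cancel_right (S.refl i) w⁻¹, inv_inv, ← hlw, hprod]
  exact mul_mem (list_prod_mem fun a ha => Subgroup.subset_closure (hl' a ha)) hw

/-- Induct on the length of a word for `g`: if the mirror of the first letter separates `p` from its
image under the rest of the word, the exchange condition shortens the word; otherwise that letter
fixes the image of `x` under the rest and can be dropped. -/
theorem smul_eq_self_of_mem_closedChamber {x : X} (hx : x ∈ S.closedChamber p) {g : G}
    (hg : g ∈ S.group) (hgx : g • x ∈ S.closedChamber p) : g • x = x := by
  rw [← closure_simpleReflections hp] at hg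
  obtain ⟨l, hl, rfl⟩ := exists_list_prod_eq_of_mem_closure_simpleReflections hg
  clear hg
  induction hn : l.length using Nat.strong_induction_on generalizing l with
  | _ n ih =>
  subst hn
  cases l with
  | nil => simp
  | cons a l =>
    obtain ⟨ha, hl_tail⟩ := List.forall_mem_cons.1 hl
    have hlg : l.prod ∈ S.group := list_prod_mem fun b hb =>
      Subgroup.closure_mono (fun t ht => ht.1) (Subgroup.subset_closure (hl_tail b hb))
    obtain ⟨j, rfl⟩ := ha.1
    obtain ⟨i, hij, hi, -⟩ := (separates_refl_smul_self hp j).exists_pos_neg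
    rw [← hij, List.prod_cons, mul_smul] at hgx ⊢
    rcases lt_or_gt_of_ne (hp.smul hlg i) with hneg | hpos
    · obtain ⟨l', hl', hlen, hprod⟩ := exchange hp hl_tail ⟨i, rfl, mul_neg_of_pos_of_neg hi hneg⟩
      rw [smul_smul, hprod] at hgx ⊢
      exact ih _ (hlen.trans (by simp)) l' hl' hgx rfl
    · have hroot : S.root i (l.prod • x) = 0 := by
        have h₁ := hgx i hi
        rw [S.root_refl_smul_self] at h₁
        have h₂ := smul_mem_closedChamber hx hlg i hpos
        linarith
      have hfix := S.refl_smul_of_root_eq_zero i _ hroot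
      rw [hfix] at hgx ⊢
      exact ih _ (by simp) l hl_tail hgx rfl

end RegularPoint

end ReflectionArrangement

section AffineReflection

variable {R V : Type*} [CommRing R] [AddCommGroup V] [Module R V]

/-- Affine automorphisms act on the space by evaluation. -/
instance affineEquivMulAction : MulAction (V ≃ᵃ[R] V) V where
  smul g x := g x
  one_smul _ := rfl
  mul_smul _ _ _ := rfl

theorem affineEquiv_smul_def (g : V ≃ᵃ[R] V) (x : V) : g • x = g x := rfl

/-- The affine reflection along `v` in the hyperplane `α + c = 0`. -/
noncomputable def affineReflection {α : V →ₗ[R] R} {v : V} (h : α v = 2) (c : R) : V ≃ᵃ[R] V :=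
  (Module.reflection h).toAffineEquiv.trans (AffineEquiv.constVAdd R V (-c • v))

theorem affineReflection_apply {α : V →ₗ[R] R} {v : V} (h : α v = 2) (c : R) (x : V) :
    affineReflection h c x = x - (α x + c) • v := by
  change -c • v + Module.reflection h x = _
  rw [Module.reflection_apply]
  module

theorem root_affineReflection_apply {α : V →ₗ[R] R} {v : V} (h : α v = 2) (c : R)
    (β : V →ₗ[R] R) (x : V) :
    β (affineReflection h c x) = β x - β v * (α x + c) := by
  rw [affineReflection_apply, map_sub, map_smul, smul_eq_mul, mul_comm]

theorem affineReflection_mul_self {α : V →ₗ[R] R} {v : V} (h : α v = 2) (c : R) :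
    affineReflection h c * affineReflection h c = 1 := by
  ext x
  simp only [AffineEquiv.coe_mul, Function.comp_apply, affineReflection_apply, map_sub, map_smul,
    smul_eq_mul, h, AffineEquiv.coe_one, id]
  module

theorem affineReflection_conj {α β : V →ₗ[R] R} {v w u : V} {m n k : R} (hα : α v = 2)
    (hβ : β w = 2) (hγ : (β - β v • α) u = 2) (hu : u = w - α w • v) (hk : k = n - β v * m) :
    affineReflection hγ k =
      affineReflection hα m * affineReflection hβ n * (affineReflection hα m)⁻¹ := by
  rw [eq_mul_inv_iff_mul_eq]
  ext x
  subst hu hk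
  simp only [AffineEquiv.coe_mul, Function.comp_apply, affineReflection_apply,
    LinearMap.sub_apply, LinearMap.smul_apply, smul_eq_mul, map_sub, map_smul, hα]
  module

end AffineReflection

section RootSystem

variable {V : Type*} [AddCommGroup V] [Module ℝ V] {Φ : Finset (V →ₗ[ℝ] ℝ)}
  {cor : (V →ₗ[ℝ] ℝ) → V}

/-- A finite crystallographic root system of linear functionals spanning the dual, with coroot
map `cor`. Outside `Φ` the values of `cor` are irrelevant. -/
structure IsCrystallographicRootSystem (Φ : Finset (V →ₗ[ℝ] ℝ)) (cor : (V →ₗ[ℝ] ℝ) → V) :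
    Prop where
  span_eq_top : Submodule.span ℝ (Φ : Set (V →ₗ[ℝ] ℝ)) = ⊤
  root_coroot_two : ∀ α ∈ Φ, α (cor α) = 2
  exists_root_coroot_eq_int : ∀ α ∈ Φ, ∀ β ∈ Φ, ∃ m : ℤ, β (cor α) = m
  sub_smul_mem : ∀ α ∈ Φ, ∀ β ∈ Φ, β - β (cor α) • α ∈ Φ

theorem finite_setOf_int_add_mul_add_neg (a b : ℝ) : {m : ℤ | (a + m) * (b + m) < 0}.Finite := by
  refine (Set.finite_Icc ⌊min (-a) (-b)⌋ ⌈max (-a) (-b)⌉).subset fun m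
    (hm : (a + m) * (b + m) < 0) => ?_
  rw [Set.mem_Icc, ← Int.cast_le (R := ℝ), ← Int.cast_le (R := ℝ)]
  refine ⟨(Int.floor_le _).trans ?_, le_trans ?_ (Int.le_ceil _)⟩
  · rcases mul_neg_iff.1 hm with h | h
    · exact (min_le_left _ _).trans (by linarith)
    · exact (min_le_right _ _).trans (by linarith)
  · rcases mul_neg_iff.1 hm with h | h
    · exact le_max_of_le_right (by linarith)
    · exact le_max_of_le_left (by linarith)

namespace IsCrystallographicRootSystem

variable (hΦ : IsCrystallographicRootSystem Φ cor)
include hΦ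

theorem coroot_eq {α : V →ₗ[ℝ] ℝ} (hα : α ∈ Φ) {v : V} (hv : α v = 2)
    (hmaps : ∀ β ∈ Φ, β - β v • α ∈ Φ) : cor α = v :=
  Module.eval_apply_injective ℝ <|
    Module.Dual.eq_of_preReflection_mapsTo Φ.finite_toSet hΦ.span_eq_top
      (hΦ.root_coroot_two α hα) (hΦ.sub_smul_mem α hα) hv hmaps

theorem coroot_sub_smul {α β : V →ₗ[ℝ] ℝ} (hα : α ∈ Φ) (hβ : β ∈ Φ) :
    cor (β - β (cor α) • α) = cor β - α (cor β) • cor α := by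
  have hα₂ := hΦ.root_coroot_two α hα
  refine hΦ.coroot_eq (hΦ.sub_smul_mem α hα β hβ) ?_ fun γ hγ => ?_
  · simp only [map_sub, map_smul, LinearMap.sub_apply, LinearMap.smul_apply, smul_eq_mul, hα₂,
      hΦ.root_coroot_two β hβ]
    ring
  · convert hΦ.sub_smul_mem α hα _ (hΦ.sub_smul_mem β hβ _ (hΦ.sub_smul_mem α hα γ hγ)) using 1
    simp only [map_sub, map_smul, LinearMap.sub_apply, LinearMap.smul_apply, smul_eq_mul, hα₂]
    module

theorem coroot_eq_smul {α : V →ₗ[ℝ] ℝ} {c : ℝ} (hα : α ∈ Φ) (hcα : c • α ∈ Φ) :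
    cor α = c • cor (c • α) := by
  refine hΦ.coroot_eq hα ?_ fun γ hγ => ?_
  · rw [map_smul, ← LinearMap.smul_apply]
    exact hΦ.root_coroot_two _ hcα
  · convert hΦ.sub_smul_mem _ hcα γ hγ using 2
    rw [map_smul]
    module

theorem affineReflection_eq_of_proportional {α β : V →ₗ[ℝ] ℝ} {m n c : ℝ} (hα : α ∈ Φ)
    (hβ : β ∈ Φ) (h : ∀ x, β x + n = c * (α x + m)) :
    affineReflection (hΦ.root_coroot_two β hβ) n =
      affineReflection (hΦ.root_coroot_two α hα) m := by
  have hβα : β = c • α := by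
    ext x
    have h₀ := h 0
    rw [map_zero, map_zero] at h₀
    rw [LinearMap.smul_apply, smul_eq_mul]
    linear_combination h x - h₀
  ext x
  rw [affineReflection_apply, affineReflection_apply, h]
  subst hβα
  rw [hΦ.coroot_eq_smul hα hβ]
  module

/-- The arrangement of the walls `H_{α,m}` with the reflections `s_{α,m}`. -/
noncomputable def affineArrangement : ReflectionArrangement (Φ × ℤ) (V ≃ᵃ[ℝ] V) V where
  root i x := i.1.1 x + i.2
  refl i := affineReflection (hΦ.root_coroot_two _ i.1.2) i.2
  refl_mul_self _ := affineReflection_mul_self _ _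
  refl_smul_of_root_eq_zero i x hx := by
    rw [affineEquiv_smul_def, affineReflection_apply, hx, zero_smul, sub_zero]
  root_refl_smul_self i x := by
    rw [affineEquiv_smul_def, root_affineReflection_apply, hΦ.root_coroot_two _ i.1.2]
    ring
  exists_root_refl_smul i j := ⟨j.1.1 (cor i.1), fun x => by
    rw [affineEquiv_smul_def, root_affineReflection_apply]
    ring⟩
  exists_conj := by
    rintro ⟨⟨α, hα⟩, m⟩ ⟨⟨β, hβ⟩, n⟩
    obtain ⟨k, hk⟩ := hΦ.exists_root_coroot_eq_int α hα β hβ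
    have hα₂ := hΦ.root_coroot_two α hα
    refine ⟨⟨⟨_, hΦ.sub_smul_mem α hα β hβ⟩, n - k * m⟩, fun x => ?_, ?_⟩
    · simp only [affineEquiv_smul_def, LinearMap.sub_apply, LinearMap.smul_apply, smul_eq_mul,
        root_affineReflection_apply, hα₂, hk]
      push_cast
      ring
    · have hcast : ((n - k * m : ℤ) : ℝ) = n - β (cor α) * m := by
        rw [hk]
        push_cast
        rfl
      exact affineReflection_conj _ _ _ (hΦ.coroot_sub_smul hα hβ) hcast
  refl_eq_of_proportional i j c h := hΦ.affineReflection_eq_of_proportional i.1.2 j.1.2 (congrFun h)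
  finite_separating x y :=
    (Set.finite_iUnion fun α : Φ => (finite_setOf_int_add_mul_add_neg (α.1 x) (α.1 y)).image
      (Prod.mk α)).subset fun ⟨α, m⟩ h => Set.mem_iUnion.2 ⟨α, m, h, rfl⟩

end IsCrystallographicRootSystem

end RootSystem

section Unseparated

open Filter Topology

variable {V : Type*} [AddCommGroup V] [Module ℝ V] {Φ : Finset (V →ₗ[ℝ] ℝ)}
  {cor : (V →ₗ[ℝ] ℝ) → V}

/-- No wall `H_{α,m}` strictly separates `x` from `y`. -/
def Unseparated (Φ : Finset (V →ₗ[ℝ] ℝ)) (x y : V) : Prop :=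
  ∀ α ∈ Φ, ∀ m : ℤ, 0 ≤ (α x + m) * (α y + m)

theorem eventually_forall_int_add_mul_add_pos (a : ℝ) :
    ∀ᶠ s in 𝓝 a, ∀ m : ℤ, a + m ≠ 0 → 0 < (a + m) * (s + m) := by
  have hmem : Set.Ioo ((⌈a⌉ : ℝ) - 1) (⌊a⌋ + 1) ∈ 𝓝 a :=
    Ioo_mem_nhds (by linarith [Int.ceil_lt_add_one a]) (Int.lt_floor_add_one a)
  filter_upwards [hmem] with s ⟨hs₁, hs₂⟩ m hm
  rcases lt_or_gt_of_ne hm with h | h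
  · have : ⌊a⌋ + 1 ≤ -m := Int.floor_lt.2 (by push_cast; linarith)
    have : (⌊a⌋ : ℝ) + 1 ≤ -m := mod_cast this
    exact mul_pos_of_neg_of_neg h (by linarith)
  · have : -m + 1 ≤ ⌈a⌉ := Int.lt_ceil.2 (by push_cast; linarith)
    have : -(m : ℝ) + 1 ≤ ⌈a⌉ := mod_cast this
    exact mul_pos h (by linarith)

theorem eventually_forall_root_add_mul_add_pos (Φ : Finset (V →ₗ[ℝ] ℝ)) (z u : V) :
    ∀ᶠ t in 𝓝[>] (0 : ℝ), ∀ α ∈ Φ, ∀ m : ℤ, α z + m ≠ 0 →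
      0 < (α z + m) * (α (z + t • u) + m) := by
  refine (eventually_all_finset Φ).2 fun α _ => ?_
  have htendsto : Tendsto (fun t : ℝ => α (z + t • u)) (𝓝[>] 0) (𝓝 (α z)) := by
    have hcont : Continuous fun t : ℝ => α z + t * α u := by fun_prop
    simpa using (hcont.tendsto 0).mono_left nhdsWithin_le_nhds
  exact htendsto.eventually (eventually_forall_int_add_mul_add_pos _)

theorem eventually_unseparated_add_smul (v : V) {u w : V} (huw : ∀ α ∈ Φ, 0 ≤ α u * α w) :
    ∀ᶠ t in 𝓝[>] (0 : ℝ), Unseparated Φ (v + t • u) (v + t • w) := by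
  filter_upwards [eventually_forall_root_add_mul_add_pos Φ v u,
    eventually_forall_root_add_mul_add_pos Φ v w] with t hu hw α hα m
  by_cases h : α v + m = 0
  · have hy (y : V) : α (v + t • y) + m = t * α y := by
      rw [map_add, map_smul, smul_eq_mul]
      linarith
    rw [hy, hy, mul_mul_mul_comm]
    exact mul_nonneg (mul_self_nonneg t) (huw α hα)
  · refine ((mul_pos_iff_of_pos_left (mul_self_pos.2 h)).1 ?_).le
    rw [mul_mul_mul_comm]
    exact mul_pos (hu α hα m h) (hw α hα m h)

namespace IsCrystallographicRootSystem

variable (hΦ : IsCrystallographicRootSystem Φ cor)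
include hΦ

theorem exists_forall_root_ne_zero : ∃ u : V, ∀ α ∈ Φ, α u ≠ 0 := by
  obtain ⟨u, hu⟩ := Module.Dual.exists_forall_ne_zero_of_forall_exists
    (fun α : Φ => (α : V →ₗ[ℝ] ℝ)) fun α =>
      ⟨cor α, by rw [hΦ.root_coroot_two α α.2]; exact two_ne_zero⟩
  exact ⟨u, fun α hα => hu ⟨α, hα⟩⟩

/-- The midpoint of `x` and `y` lies only on walls containing both points, so moving it slightly
in a generic direction leads into the interior of a common chamber. -/
theorem exists_mem_closedChamber_of_unseparated {x y : V} (h : Unseparated Φ x y) :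
    ∃ p, hΦ.affineArrangement.IsRegular p ∧ x ∈ hΦ.affineArrangement.closedChamber p ∧
      y ∈ hΦ.affineArrangement.closedChamber p := by
  obtain ⟨u, hu⟩ := hΦ.exists_forall_root_ne_zero
  set z := midpoint ℝ x y
  have hz (α : V →ₗ[ℝ] ℝ) (m : ℤ) : 2 * (α z + m) = (α x + m) + (α y + m) := by
    simp only [z, midpoint_eq_smul_add, map_smul, map_add, smul_eq_mul, invOf_eq_inv]
    ring
  obtain ⟨t, ht, ht₀ : 0 < t⟩ :=
    ((eventually_forall_root_add_mul_add_pos Φ z u).and self_mem_nhdsWithin).exists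
  have hside (α : V →ₗ[ℝ] ℝ) (hα : α ∈ Φ) (m : ℤ) (hpos : 0 < α (z + t • u) + m) :
      0 ≤ α x + m ∧ 0 ≤ α y + m := by
    have hz' : 0 ≤ α z + m := by
      by_contra! hneg
      exact (ht α hα m hneg.ne).not_gt (mul_neg_of_neg_of_pos hneg hpos)
    have hxy := h α hα m
    constructor <;> by_contra! hneg <;> nlinarith [hz α m]
  refine ⟨z + t • u, ?_, fun i hi => (hside i.1 i.1.2 i.2 hi).1,
    fun i hi => (hside i.1 i.1.2 i.2 hi).2⟩
  rintro ⟨⟨α, hα⟩, m⟩ (h₀ : α (z + t • u) + m = 0)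
  have hz₀ : α z + m = 0 := by
    by_contra hne
    have := ht α hα m hne
    rw [h₀, mul_zero] at this
    exact this.false
  rw [map_add, map_smul, smul_eq_mul] at h₀
  exact mul_ne_zero ht₀.ne' (hu α hα) (by linarith)

theorem apply_eq_self_of_unseparated {g : V ≃ᵃ[ℝ] V} (hg : g ∈ hΦ.affineArrangement.group)
    {x : V} (h : Unseparated Φ x (g x)) : g x = x := by
  obtain ⟨p, hp, hx, hgx⟩ := hΦ.exists_mem_closedChamber_of_unseparated h
  exact ReflectionArrangement.smul_eq_self_of_mem_closedChamber hp hx hg hgx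

/-- Contracting towards the fixed point `v` brings `v + u` and `v + w` into a common chamber. -/
theorem eq_of_apply_add_eq_add {g : V ≃ᵃ[ℝ] V} (hg : g ∈ hΦ.affineArrangement.group) {v u w : V}
    (hv : g v = v) (huw : ∀ α ∈ Φ, 0 ≤ α u * α w) (hgu : g (v + u) = v + w) : u = w := by
  obtain ⟨t, ht, ht₀ : 0 < t⟩ :=
    ((eventually_unseparated_add_smul v huw).and self_mem_nhdsWithin).exists
  have hlin (y : V) : g (v + y) = v + g.linear y := by
    simpa only [vadd_eq_add, hv, add_comm] using g.map_vadd v y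
  have hu : g.linear u = w := add_left_cancel ((hlin u).symm.trans hgu)
  have hfix : g (v + t • u) = v + t • u := by
    refine hΦ.apply_eq_self_of_unseparated hg ?_
    rwa [hlin, map_smul, hu]
  rw [hlin, map_smul, hu] at hfix
  exact (smul_right_injective V ht₀.ne' (add_left_cancel hfix)).symm

end IsCrystallographicRootSystem

end Unseparated

section Galleries

variable {Φ pos : Finset (A →ₗ[ℝ] ℝ)} {cor : (A →ₗ[ℝ] ℝ) → A}

theorem IsCrystallographicRootSystem.group_affineArrangement
    (hΦ : IsCrystallographicRootSystem Φ cor) :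
    hΦ.affineArrangement.group = affWeyl Φ cor := by
  refine congrArg Subgroup.closure (Set.ext fun g => ⟨?_, ?_⟩)
  · rintro ⟨⟨⟨α, hα⟩, m⟩, rfl⟩
    exact ⟨α, hα, m, affineReflection_apply (hΦ.root_coroot_two α hα) m⟩
  · rintro ⟨α, hα, m, hg⟩
    refine ⟨⟨⟨α, hα⟩, m⟩, AffineEquiv.ext fun x => ?_⟩
    exact (affineReflection_apply (hΦ.root_coroot_two α hα) m x).trans (hg x).symm

theorem IsVertexFace.exists_eq_singleton [FiniteDimensional ℝ A] {F : Set A}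
    (hF : IsVertexFace pos F) : ∃ v, F = {v} := by
  obtain ⟨⟨⟨v, hv⟩, -⟩, hdim⟩ := hF
  refine ⟨v, Set.eq_singleton_iff_unique_mem.2 ⟨hv, fun w hw => ?_⟩⟩
  have hmem : w -ᵥ v ∈ (affineSpan ℝ F).direction :=
    AffineSubspace.vsub_mem_direction (subset_affineSpan ℝ F hw) (subset_affineSpan ℝ F hv)
  rwa [Submodule.finrank_eq_zero.1 hdim, Submodule.mem_bot, vsub_eq_zero_iff_eq] at hmem

theorem mul_nonneg_of_mem_halfChoice {β : A →ₗ[ℝ] ℝ} {m : ℤ} {c : Fin 3} {x y : A}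
    (hx : x ∈ halfChoice β m c) (hy : y ∈ halfChoice β m c) : 0 ≤ (β x + m) * (β y + m) := by
  unfold halfChoice at hx hy
  split_ifs at hx hy
  · exact (mul_eq_zero_of_left hx _).ge
  · exact mul_nonneg hx hy
  · exact mul_nonneg_of_nonpos_of_nonpos hx hy

section PositiveSystem

variable (hsplit : ∀ α ∈ Φ, α ∈ pos ∨ -α ∈ pos)
include hsplit

theorem IsFace.unseparated {F : Set A} (hF : IsFace pos F) {x y : A} (hx : x ∈ F) (hy : y ∈ F) :
    Unseparated Φ x y := by
  obtain ⟨-, σ, rfl⟩ := hF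
  have hpos (β) (hβ : β ∈ pos) (n : ℤ) : 0 ≤ (β x + n) * (β y + n) := by
    simp only [Set.mem_iInter] at hx hy
    exact mul_nonneg_of_mem_halfChoice (hx β hβ n) (hy β hβ n)
  intro α hα m
  rcases hsplit α hα with h | h
  · exact hpos α h m
  · have := hpos (-α) h (-m)
    rw [LinearMap.neg_apply, LinearMap.neg_apply] at this
    push_cast at this
    linarith

theorem mul_nonneg_of_mem_domChamber {u w : A} (hu : u ∈ domChamber pos)
    (hw : w ∈ domChamber pos) : ∀ α ∈ Φ, 0 ≤ α u * α w := by
  intro α hα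
  rcases hsplit α hα with h | h
  · exact mul_nonneg (hu α h) (hw α h)
  · simpa using mul_nonneg (hu _ h) (hw _ h)

variable (hΦ : IsCrystallographicRootSystem Φ cor)
include hΦ

theorem IsFace.apply_eq_self {F : Set A} (hF : IsFace pos F) {g : A ≃ᵃ[ℝ] A}
    (hg : g ∈ affWeyl Φ cor) {x : A} (hx : x ∈ F) (hgx : g x ∈ F) : g x = x :=
  hΦ.apply_eq_self_of_unseparated (hΦ.group_affineArrangement ▸ hg) (hF.unseparated hsplit hx hgx)

theorem SameType.eq_of_subset_isFace {W W' F : Set A} (h : SameType Φ cor W W')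
    (hF : IsFace pos F) (hW : W ⊆ F) (hW' : W' ⊆ F) : W = W' := by
  obtain ⟨g, hg, rfl⟩ := h
  have hfix : Set.EqOn g id W := fun x hx =>
    hF.apply_eq_self hsplit hΦ hg (hW hx) (hW' (Set.mem_image_of_mem g hx))
  rw [hfix.image_eq, Set.image_id]

theorem SameType.eq_of_subset_add_domChamber {F F' : Set A} (h : SameType Φ cor F F')
    (hF' : IsFace pos F') {v : A} (hv : v ∈ F) (hv' : v ∈ F')
    (hdom : F ⊆ {v} + domChamber pos) (hdom' : F' ⊆ {v} + domChamber pos) : F = F' := by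
  obtain ⟨g, hg, rfl⟩ := h
  have hgv : g v = v := hF'.apply_eq_self hsplit hΦ hg hv' (Set.mem_image_of_mem g hv)
  have hfix : Set.EqOn g id F := by
    intro x hx
    obtain ⟨_, rfl, u, hu, rfl⟩ := hdom hx
    obtain ⟨_, rfl, w, hw, hgu⟩ := hdom' (Set.mem_image_of_mem g hx)
    rw [← hΦ.group_affineArrangement] at hg
    rw [id, ← hgu, hΦ.eq_of_apply_add_eq_add hg hgv (mul_nonneg_of_mem_domChamber hsplit hu hw)
      hgu.symm]
  rw [hfix.image_eq, Set.image_id]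

end PositiveSystem

theorem OneSkelGallery.eq_of_V_eq_of_E_eq {r : ℕ} {δ δ' : OneSkelGallery A Φ pos r}
    (hV : ∀ i, δ.V i = δ'.V i) (hE : ∀ i, δ.E i = δ'.E i) : δ = δ' := by
  cases δ
  cases δ'
  obtain rfl := funext hV
  obtain rfl := funext hE
  rfl

end Galleries

/-- Two one-skeleton galleries with the same special source and componentwise
the same types, both minimal relative to the dominant Weyl chamber `C⁺`, are equal. -/
theorem statement7 {A : Type*} [NormedAddCommGroup A] [NormedSpace ℝ A]
    [FiniteDimensional ℝ A]
    (Φ pos : Finset (A →ₗ[ℝ] ℝ)) (cor : (A →ₗ[ℝ] ℝ) → A)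
    -- `Φ` is a finite crystallographic root system of linear functionals spanning the dual,
    -- with positive system `pos` and coroots `cor`:
    (hne : ∀ α ∈ Φ, α ≠ (0 : A →ₗ[ℝ] ℝ))
    (hspan : Submodule.span ℝ (Φ : Set (A →ₗ[ℝ] ℝ)) = ⊤)
    (hpos : pos ⊆ Φ)
    (hsplit : ∀ α ∈ Φ, α ∈ pos ∨ -α ∈ pos)
    (hnotboth : ∀ α ∈ pos, -α ∉ pos)
    (hcor : ∀ α ∈ Φ, α (cor α) = 2)
    (hcrys : ∀ α ∈ Φ, ∀ β ∈ Φ, ∃ m : ℤ, β (cor α) = (m : ℝ))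
    (hinv : ∀ α ∈ Φ, ∀ β ∈ Φ, β - β (cor α) • α ∈ Φ)
    -- a fixed special vertex `V_0`:
    (V0 : Set A) (hV0 : IsVertexFace pos V0) (hV0sp : ∀ x ∈ V0, IsSpecialPt Φ x)
    -- two galleries with source `V_0` and the same type:
    {r : ℕ} (δ' δ'' : OneSkelGallery A Φ pos r)
    (hsrc' : δ'.V 0 = V0) (hsrc'' : δ''.V 0 = V0)
    (htypeV : ∀ i, SameType Φ cor (δ'.V i) (δ''.V i))
    (htypeE : ∀ i, SameType Φ cor (δ'.E i) (δ''.E i))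
    -- both minimal relative to the dominant Weyl chamber:
    (hmin' : ∀ i : Fin (r + 1), δ'.E i ⊆ δ'.V i.castSucc + domChamber pos)
    (hmin'' : ∀ i : Fin (r + 1), δ''.E i ⊆ δ''.V i.castSucc + domChamber pos) :
    δ' = δ'' := by
  have hΦ : IsCrystallographicRootSystem Φ cor := ⟨hspan, hcor, hcrys, hinv⟩
  have hE (i : Fin (r + 1)) (hV : δ'.V i.castSucc = δ''.V i.castSucc) : δ'.E i = δ''.E i := by
    obtain ⟨v, hv'⟩ := (δ'.vertex_V i.castSucc).exists_eq_singleton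
    have hv'' : δ''.V i.castSucc = {v} := hV ▸ hv'
    exact (htypeE i).eq_of_subset_add_domChamber hsplit hΦ (δ''.edge_E i).1
      (δ'.subset_left i (hv' ▸ rfl)) (δ''.subset_left i (hv'' ▸ rfl))
      (hv' ▸ hmin' i) (hv'' ▸ hmin'' i)
  have hV (i : Fin (r + 2)) : δ'.V i = δ''.V i := by
    induction i using Fin.induction with
    | zero => rw [hsrc', hsrc'']
    | succ i ih =>
      exact (htypeV i.succ).eq_of_subset_isFace hsplit hΦ (δ''.edge_E i).1
        (hE i ih ▸ δ'.subset_right i) (δ''.subset_right i)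
  exact OneSkelGallery.eq_of_V_eq_of_E_eq hV fun i => hE i (hV _)
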